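/- arXiv:1503.01080 — 2 statements merged into one kernel-verified Lean document; each statement's English description precedes it below -/
import Mathlib

section
/- Let m be an odd positive integer and let a be a real number with |a| ≤ 1. If there exists a real number b with T_m(b) = a such that b is constructible over the subfield ℚ(a) of ℝ generated by a, then there exists c ∈ ℚ(a) with T_m(c) = a. -/
open Polynomial

/-- A real number `b` is constructible over a subfield `F` of `ℝ` if there is a finite
chain of subfields `F = F₀ ⊆ F₁ ⊆ … ⊆ F_k` of `ℝ` with `b ∈ F_k`, each step obtained by
adjoining a square root of an element of the previous field. -/
def IsConstructibleOver (F : Subfield ℝ) (b : ℝ) : Prop :=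
  ∃ (k : ℕ) (Fs : ℕ → Subfield ℝ), Fs 0 = F ∧ b ∈ Fs k ∧
    ∀ i < k, ∃ x : ℝ, x ^ 2 ∈ Fs i ∧ Fs (i + 1) = Subfield.closure (↑(Fs i) ∪ {x})

/-!
Descend one quadratic extension `K(x) / K` at a time. If a root `b` of `T_m = a` lies in `K(x)` but
not in `K`, its conjugate `b'` is a root too. Write `b = cos θ` and `b' = cos (θ + 2α)`; as `m` is
odd, `α` can be chosen with `mα ∈ 2πℤ`. Then `c = cos (θ + α)` is again a root, `e = cos α`
satisfies `T_m(e) = 1`, and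

  `e * c = (b + b') / 2 ∈ K`,  `e ^ 2 + c ^ 2 = b * b' + 1 ∈ K`.

If `e ∈ K`, then `c ∈ K`. If `e ∉ K`, then `e ^ 2` and `c ^ 2` are conjugate over `K`, which forces
`a ^ 2 = T_m(c) ^ 2 = T_m(e) ^ 2 = 1`, so that `a = ± 1` is itself a root. Replacing `cos θ` by
`(z + z⁻¹) / 2` makes the argument work over every field of characteristic different from two.
-/

open Polynomial.Chebyshev (T)

lemma exists_sq_eq_and_pow_eq_one_of_odd {G : Type*} [Monoid G] {m : ℕ} (hm : Odd m) {g : G}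
    (hg : g ^ m = 1) : ∃ h : G, h ^ 2 = g ∧ h ^ m = 1 := by
  obtain ⟨k, hk⟩ := hm
  refine ⟨g ^ (k + 1), ?_, by rw [pow_right_comm, hg, one_pow]⟩
  rw [← pow_mul, show (k + 1) * 2 = m + 1 by lia, pow_succ, hg, one_mul]

section ChebyshevValues

variable {R : Type*} [CommRing R]

lemma eval_T_neg_of_odd {m : ℕ} (hm : Odd m) (x : R) :
    (T R m).eval (-x) = -(T R m).eval x := by
  rw [Chebyshev.T_eval_neg, Int.negOnePow_odd m (by exact_mod_cast hm)]
  simp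

lemma eval_T_two_mul_sq_sub_one (n : ℤ) (x : R) :
    (T R n).eval (2 * x ^ 2 - 1) = 2 * (T R n).eval x ^ 2 - 1 := by
  have h_comm : (T R n).comp (T R 2) = (T R 2).comp (T R n) := by
    rw [← Chebyshev.T_mul, ← Chebyshev.T_mul, mul_comm]
  simpa [Chebyshev.T_two] using congrArg (eval x) h_comm

lemma exists_eval_T_eq_of_sq_eq_one [NoZeroDivisors R] {m : ℕ} (hm : Odd m) {a : R}
    (ha : a ^ 2 = 1) : ∃ c, (T R m).eval c = a := by
  rcases sq_eq_one_iff.mp ha with rfl | rfl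
  · exact ⟨1, Chebyshev.T_eval_one R m⟩
  · exact ⟨-1, by rw [eval_T_neg_of_odd hm, Chebyshev.T_eval_one]⟩

end ChebyshevValues

section Joukowsky

variable {L : Type*} [Field L]

/-- The Joukowsky map, an algebraic substitute for the cosine: `joukowsky (exp (i * θ)) = cos θ`. -/
def joukowsky (z : L) : L := (z + z⁻¹) / 2

lemma joukowsky_inv (z : L) : joukowsky z⁻¹ = joukowsky z := by
  rw [joukowsky, joukowsky, inv_inv, add_comm]

lemma joukowsky_mul_joukowsky_mul {z ζ : L} (hz : z ≠ 0) (hζ : ζ ≠ 0) :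
    joukowsky ζ * joukowsky (z * ζ) = (joukowsky z + joukowsky (z * ζ ^ 2)) / 2 := by
  simp only [joukowsky]
  field_simp
  ring

variable [NeZero (2 : L)]

lemma eval_T_joukowsky {z : L} (hz : z ≠ 0) (n : ℕ) :
    (T L n).eval (joukowsky z) = joukowsky (z ^ n) := by
  have h_two : (2 : L) ≠ 0 := two_ne_zero
  have h_C := congrArg (eval (joukowsky z)) (Chebyshev.C_comp_two_mul_X L n)
  have h_dickson := dickson_one_one_eval_add_inv z z⁻¹ (mul_inv_cancel₀ hz) n
  rw [dickson_one_one_eq_chebyshev_C] at h_dickson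
  rw [eval_comp] at h_C
  simp only [eval_mul, eval_X, eval_ofNat, joukowsky, mul_div_cancel₀ _ h_two] at h_C
  rw [joukowsky, joukowsky, eq_div_iff h_two, mul_comm, ← h_C, h_dickson, inv_pow]

lemma exists_joukowsky_eq [IsAlgClosed L] (b : L) : ∃ z ≠ 0, joukowsky z = b := by
  obtain ⟨r, hr⟩ := IsAlgClosed.exists_eq_mul_self (b ^ 2 - 1)
  have h_mul : (b + r) * (b - r) = 1 := by linear_combination hr
  refine ⟨b + r, left_ne_zero_of_mul_eq_one h_mul, ?_⟩
  rw [joukowsky, inv_eq_of_mul_eq_one_right h_mul]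
  field_simp
  ring

lemma eq_or_eq_inv_of_joukowsky_eq {z w : L} (hz : z ≠ 0) (hw : w ≠ 0)
    (h : joukowsky z = joukowsky w) : z = w ∨ z = w⁻¹ := by
  have h_factor : (z - w) * (z * w - 1) = 0 := by
    simp only [joukowsky] at h
    field_simp at h
    linear_combination h
  rcases mul_eq_zero.mp h_factor with h_eq | h_inv
  · exact Or.inl (sub_eq_zero.mp h_eq)
  · exact Or.inr (eq_inv_of_mul_eq_one_left (sub_eq_zero.mp h_inv))

lemma joukowsky_sq_add_joukowsky_mul_sq {z ζ : L} (hz : z ≠ 0) (hζ : ζ ≠ 0) :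
    joukowsky ζ ^ 2 + joukowsky (z * ζ) ^ 2 = joukowsky z * joukowsky (z * ζ ^ 2) + 1 := by
  simp only [joukowsky]
  field_simp
  ring

lemma exists_joukowsky_eq_of_eval_T_eq [IsAlgClosed L] {m : ℕ} {b b' : L}
    (h : (T L m).eval b = (T L m).eval b') :
    ∃ z ≠ 0, ∃ w ≠ 0, joukowsky z = b ∧ joukowsky w = b' ∧ z ^ m = w ^ m := by
  obtain ⟨z, hz, rfl⟩ := exists_joukowsky_eq b
  obtain ⟨w, hw, rfl⟩ := exists_joukowsky_eq b'
  rw [eval_T_joukowsky hz, eval_T_joukowsky hw] at h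
  rcases eq_or_eq_inv_of_joukowsky_eq (pow_ne_zero m hz) (pow_ne_zero m hw) h with h_eq | h_inv
  · exact ⟨z, hz, w, hw, rfl, rfl, h_eq⟩
  · exact ⟨z, hz, w⁻¹, inv_ne_zero hw, rfl, joukowsky_inv w, by rw [h_inv, inv_pow]⟩

lemma exists_midpoint_of_eval_T_eq [IsAlgClosed L] {m : ℕ} (hm : Odd m) {b b' : L}
    (h : (T L m).eval b = (T L m).eval b') :
    ∃ c e : L, (T L m).eval c = (T L m).eval b ∧ (T L m).eval e = 1 ∧
      e * c = (b + b') / 2 ∧ e ^ 2 + c ^ 2 = b * b' + 1 := by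
  obtain ⟨z, hz, w, hw, rfl, rfl, h_pow⟩ := exists_joukowsky_eq_of_eval_T_eq h
  have h_ratio : (w / z) ^ m = 1 := by rw [div_pow, h_pow, div_self (pow_ne_zero m hw)]
  obtain ⟨ζ, hζ_sq, hζ_pow⟩ := exists_sq_eq_and_pow_eq_one_of_odd hm h_ratio
  have hw_eq : w = z * ζ ^ 2 := by rw [hζ_sq, mul_div_cancel₀ w hz]
  have hζ : ζ ≠ 0 := by
    rintro rfl
    simp [hm.pos.ne'] at hζ_pow
  refine ⟨joukowsky (z * ζ), joukowsky ζ, ?_, ?_, ?_, ?_⟩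
  · rw [eval_T_joukowsky (mul_ne_zero hz hζ), eval_T_joukowsky hz, mul_pow, hζ_pow, mul_one]
  · rw [eval_T_joukowsky hζ, hζ_pow, joukowsky, inv_one, one_add_one_eq_two,
      div_self two_ne_zero]
  · rw [hw_eq, joukowsky_mul_joukowsky_mul hz hζ]
  · rw [hw_eq, joukowsky_sq_add_joukowsky_mul_sq hz hζ]

end Joukowsky

section QuadraticDescent

open IntermediateField

variable {K L : Type*} [Field K] [Field L] [Algebra K L]

lemma minpoly_eq_of_add_eq_of_mul_eq {y z : L} {s p : K} (hy : y ∉ (algebraMap K L).range)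
    (h_add : y + z = algebraMap K L s) (h_mul : y * z = algebraMap K L p) :
    minpoly K y = X ^ 2 - C s * X + C p := by
  have h_monic : (X ^ 2 - C s * X + C p).Monic := by monicity!
  have h_root : aeval y (X ^ 2 - C s * X + C p) = 0 := by
    simp only [map_add, map_sub, map_mul, map_pow, aeval_X, aeval_C, ← h_add, ← h_mul]
    ring
  have h_integral : IsIntegral K y := ⟨_, h_monic, h_root⟩
  refine (eq_of_monic_of_dvd_of_natDegree_le (minpoly.monic h_integral) h_monic
    (minpoly.dvd K y h_root) ?_).symm
  calc (X ^ 2 - C s * X + C p).natDegree ≤ 2 := by compute_degree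
    _ ≤ (minpoly K y).natDegree := (minpoly.two_le_natDegree_iff h_integral).mpr hy

lemma aeval_eq_of_quadratic_conjugate {y z : L} {s p a : K} (hy : y ∉ (algebraMap K L).range)
    (h_add : y + z = algebraMap K L s) (h_mul : y * z = algebraMap K L p) {f : K[X]}
    (hf : aeval y f = algebraMap K L a) : aeval z f = algebraMap K L a := by
  have h_conj : aeval z (minpoly K y) = 0 := by
    rw [minpoly_eq_of_add_eq_of_mul_eq hy h_add h_mul]
    simp only [map_add, map_sub, map_mul, map_pow, aeval_X, aeval_C, ← h_add, ← h_mul]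
    ring
  have h_dvd : minpoly K y ∣ f - C a := minpoly.dvd K y (by simp [hf])
  have h_zero := aeval_eq_zero_of_dvd_aeval_eq_zero h_dvd h_conj
  rwa [map_sub, aeval_C, sub_eq_zero] at h_zero

lemma exists_eq_add_mul_of_mem_adjoin_sqrt {x b : L} {d : K} (hx : x ^ 2 = algebraMap K L d)
    (hb : b ∈ K⟮x⟯) : ∃ u v : K, b = algebraMap K L u + algebraMap K L v * x := by
  have h_root : aeval x (X ^ 2 - C d) = 0 := by simp [hx]
  have h_monic : (X ^ 2 - C d).Monic := monic_X_pow_sub_C d two_ne_zero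
  have h_integral : IsIntegral K x := ⟨_, h_monic, h_root⟩
  have h_degree : (minpoly K x).natDegree ≤ 2 := by
    simpa using natDegree_le_of_dvd (minpoly.dvd K x h_root) h_monic.ne_zero
  obtain ⟨f, hf_degree, hf⟩ := (adjoin.powerBasis h_integral).exists_eq_aeval ⟨b, hb⟩
  rw [adjoin.powerBasis_dim] at hf_degree
  obtain ⟨v, u, rfl⟩ := exists_eq_X_add_C_of_natDegree_le_one (p := f) (by lia)
  refine ⟨u, v, ?_⟩
  simpa [add_comm] using congrArg (algebraMap K⟮x⟯ L) hf

lemma sq_notMem_range_of_eval_T_eq_one [NeZero (2 : L)] {m : ℕ} (hm : Odd m) {e : L}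
    (he : (T L m).eval e = 1) (he_notMem : e ∉ (algebraMap K L).range) :
    e ^ 2 ∉ (algebraMap K L).range := by
  rintro ⟨d, hd⟩
  have h_neg : aeval (-e) (T K m) = algebraMap K L 1 :=
    aeval_eq_of_quadratic_conjugate (s := 0) (p := -d) he_notMem (by simp)
      (by rw [map_neg, hd]; ring) (by rw [Chebyshev.aeval_T, he, map_one])
  rw [Chebyshev.aeval_T, eval_T_neg_of_odd hm, he, map_one] at h_neg
  exact two_ne_zero (α := L) (by linear_combination -h_neg)

lemma eval_T_sq_eq_one_of_quadratic_conjugate [NeZero (2 : L)] {n : ℤ} {c e : L} {s p : K}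
    (he : (T L n).eval e = 1) (he_notMem : e ^ 2 ∉ (algebraMap K L).range)
    (h_add : e ^ 2 + c ^ 2 = algebraMap K L s) (h_mul : e ^ 2 * c ^ 2 = algebraMap K L p) :
    (T L n).eval c ^ 2 = 1 := by
  have h_aeval (x : L) :
      aeval (x ^ 2) ((T K n).comp (2 * X - 1)) = 2 * (T L n).eval x ^ 2 - 1 := by
    rw [aeval_comp, Chebyshev.aeval_T, ← eval_T_two_mul_sq_sub_one]
    simp only [map_sub, map_mul, map_ofNat, map_one, aeval_X]
  have h_one : aeval (c ^ 2) ((T K n).comp (2 * X - 1)) = algebraMap K L 1 :=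
    aeval_eq_of_quadratic_conjugate he_notMem h_add h_mul
      (by rw [h_aeval, he, map_one]; ring)
  rw [h_aeval, map_one] at h_one
  exact mul_left_cancel₀ two_ne_zero (by linear_combination h_one)

lemma exists_eval_T_eq_of_conjugate_roots [NeZero (2 : L)] [IsAlgClosed L] {m : ℕ} (hm : Odd m)
    {a s p : K} {b b' : L} (hb : (T L m).eval b = algebraMap K L a)
    (hb' : (T L m).eval b' = algebraMap K L a) (h_add : b + b' = algebraMap K L s)
    (h_mul : b * b' = algebraMap K L p) : ∃ c : K, (T K m).eval c = a := by
  obtain ⟨c, e, hc, he, hec_mul, hec_add⟩ := exists_midpoint_of_eval_T_eq hm (hb.trans hb'.symm)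
  rw [hb] at hc
  have h_prod : e * c = algebraMap K L (s / 2) := by
    rw [hec_mul, h_add, map_div₀, map_ofNat]
  by_cases he_mem : e ∈ (algebraMap K L).range
  · obtain ⟨e₀, rfl⟩ := he_mem
    have he₀ : algebraMap K L e₀ ≠ 0 := by
      intro h_zero
      rw [h_zero, Chebyshev.T_eval_zero_of_odd L (by exact_mod_cast hm)] at he
      exact zero_ne_one he
    have hc_eq : c = algebraMap K L (s / 2 / e₀) := by
      rw [map_div₀, ← h_prod, mul_div_cancel_left₀ c he₀]
    refine ⟨s / 2 / e₀, (algebraMap K L).injective ?_⟩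
    rw [Chebyshev.algebraMap_eval_T, ← hc_eq, hc]
  · have hc_sq : (T L m).eval c ^ 2 = 1 :=
      eval_T_sq_eq_one_of_quadratic_conjugate (s := p + 1) (p := (s / 2) ^ 2) he
        (sq_notMem_range_of_eval_T_eq_one hm he he_mem)
        (by rw [hec_add, h_mul, map_add, map_one]) (by rw [← mul_pow, h_prod, map_pow])
    refine exists_eval_T_eq_of_sq_eq_one hm ((algebraMap K L).injective ?_)
    rw [map_pow, ← hc, hc_sq, map_one]

lemma exists_eval_T_eq_of_quadratic_root [NeZero (2 : L)] {m : ℕ} (hm : Odd m) {a s p : K}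
    {b b' : L} (hb : (T L m).eval b = algebraMap K L a) (h_add : b + b' = algebraMap K L s)
    (h_mul : b * b' = algebraMap K L p) : ∃ c : K, (T K m).eval c = a := by
  by_cases hb_mem : b ∈ (algebraMap K L).range
  · obtain ⟨c, rfl⟩ := hb_mem
    exact ⟨c, (algebraMap K L).injective (by rw [Chebyshev.algebraMap_eval_T, hb])⟩
  have hb' : (T L m).eval b' = algebraMap K L a := by
    rw [← Chebyshev.aeval_T (R := K)] at hb ⊢
    exact aeval_eq_of_quadratic_conjugate hb_mem h_add h_mul hb
  let ι := algebraMap L (AlgebraicClosure L)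
  have h_two : NeZero (2 : AlgebraicClosure L) :=
    ⟨map_ofNat ι 2 ▸ (map_ne_zero ι).mpr two_ne_zero⟩
  have h_tower (r : K) : algebraMap K (AlgebraicClosure L) r = ι (algebraMap K L r) :=
    IsScalarTower.algebraMap_apply K L (AlgebraicClosure L) r
  exact exists_eval_T_eq_of_conjugate_roots (b := ι b) (b' := ι b') hm
    (by rw [h_tower, ← hb, Chebyshev.algebraMap_eval_T])
    (by rw [h_tower, ← hb', Chebyshev.algebraMap_eval_T])
    (by rw [h_tower, ← h_add, map_add]) (by rw [h_tower, ← h_mul, map_mul])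

lemma exists_eval_T_eq_of_mem_adjoin_sqrt [NeZero (2 : L)] {m : ℕ} (hm : Odd m) {a d : K}
    {x b : L} (hx : x ^ 2 = algebraMap K L d) (hb_mem : b ∈ K⟮x⟯)
    (hb : (T L m).eval b = algebraMap K L a) : ∃ c : K, (T K m).eval c = a := by
  obtain ⟨u, v, rfl⟩ := exists_eq_add_mul_of_mem_adjoin_sqrt hx hb_mem
  refine exists_eval_T_eq_of_quadratic_root (b' := algebraMap K L u - algebraMap K L v * x)
    (s := 2 * u) (p := u ^ 2 - v ^ 2 * d) hm hb ?_ ?_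
  · rw [map_mul, map_ofNat]
    ring
  · rw [map_sub, map_mul, map_pow, map_pow, ← hx]
    ring

end QuadraticDescent

section Constructible

variable {L : Type*} [Field L]

/-- Constructibility of an element of an arbitrary field `L` over a subfield `F`: the definition of
`IsConstructibleOver` with `ℝ` replaced by `L`, to which it unfolds for `L = ℝ`. -/
def IsQuadraticallyConstructibleOver (F : Subfield L) (b : L) : Prop :=
  ∃ (k : ℕ) (Fs : ℕ → Subfield L), Fs 0 = F ∧ b ∈ Fs k ∧
    ∀ i < k, ∃ x : L, x ^ 2 ∈ Fs i ∧ Fs (i + 1) = Subfield.closure (↑(Fs i) ∪ {x})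

lemma exists_mem_eval_T_eq_of_mem_closure_sqrt [NeZero (2 : L)] {m : ℕ} (hm : Odd m)
    {F : Subfield L} {a x b : L} (ha : a ∈ F) (hx : x ^ 2 ∈ F)
    (hb_mem : b ∈ Subfield.closure (↑F ∪ {x})) (hb : (T L m).eval b = a) :
    ∃ c ∈ F, (T L m).eval c = a := by
  have hb_adjoin : b ∈ IntermediateField.adjoin F {x} := by
    rwa [← IntermediateField.mem_toSubfield, IntermediateField.adjoin_toSubfield,
      show Set.range (algebraMap F L) = F from Subtype.range_coe]
  obtain ⟨c, hc⟩ := exists_eval_T_eq_of_mem_adjoin_sqrt (K := F) (a := ⟨a, ha⟩) (d := ⟨x ^ 2, hx⟩)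
    hm rfl hb_adjoin hb
  exact ⟨c, c.2, (Chebyshev.algebraMap_eval_T c m).symm.trans (congrArg (algebraMap F L) hc)⟩

theorem exists_root_in_base_of_constructible_root_general [NeZero (2 : L)] {m : ℕ} (hm : Odd m)
    {F : Subfield L} {a b : L} (ha : a ∈ F) (hb : (T L m).eval b = a)
    (hb_constr : IsQuadraticallyConstructibleOver F b) : ∃ c ∈ F, (T L m).eval c = a := by
  obtain ⟨k, Fs, rfl, hb_mem, h_step⟩ := hb_constr
  induction k generalizing Fs with
  | zero => exact ⟨b, hb_mem, hb⟩
  | succ k ih =>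
    obtain ⟨x, hx, hFs⟩ := h_step 0 k.succ_pos
    have ha_one : a ∈ Fs 1 := hFs ▸ Subfield.subset_closure (Or.inl ha)
    obtain ⟨c, hc_mem, hc⟩ := ih (fun i ↦ Fs (i + 1)) ha_one hb_mem
      fun i hi ↦ h_step (i + 1) (Nat.succ_lt_succ hi)
    exact exists_mem_eval_T_eq_of_mem_closure_sqrt hm ha hx (hFs ▸ hc_mem) hc

end Constructible

/-- Let `m` be an odd positive integer and `a` a real number with
`|a| ≤ 1`.  If some real `b` with `T_m(b) = a` is constructible over the subfield
`ℚ(a)` of `ℝ` generated by `a`, then `T_m(x) = a` already has a solution in `ℚ(a)`. -/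
theorem exists_root_in_base_of_constructible_root (m : ℕ) (hm : 0 < m) (hmodd : Odd m)
    (a : ℝ) (ha : |a| ≤ 1)
    (hb : ∃ b : ℝ, (Chebyshev.T ℝ m).eval b = a ∧
      IsConstructibleOver (Subfield.closure {a}) b) :
    ∃ c ∈ Subfield.closure ({a} : Set ℝ), (Chebyshev.T ℝ m).eval c = a := by
  obtain ⟨b, hb, hb_constr⟩ := hb
  exact exists_root_in_base_of_constructible_root_general hmodd
    (Subfield.subset_closure rfl) hb hb_constr
end

section
/- Let m be a positive integer whose maximal odd divisor is greater than 1 (i.e., m is not a power of 2). For a rational number a, say a ∈ m-Sect if |a| ≤ 1 and there exists a real number b, constructible over ℚ (the prime subfield of ℝ), with T_m(b) = a. Then the density of m-Sect in [−1,1] ∩ ℚ is zero: the ratio #{a ∈ ℚ : a ∈ m-Sect and H(a) ≤ B} / #{a ∈ ℚ : |a| ≤ 1 and H(a) ≤ B} tends to 0 as B → ∞. -/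
open Polynomial

/-- The height of a rational number `x` (in lowest terms): the maximum of the absolute
value of its numerator and its denominator. -/
def ratHeight (x : ℚ) : ℕ := max x.num.natAbs x.den

/-- A rational number `a` belongs to `m`-Sect if `|a| ≤ 1` and some real number `b`
constructible over `ℚ` (the prime subfield `⊥` of `ℝ`) satisfies `T_m(b) = a`; i.e., an
angle with cosine `a` is `m`-sectable by straightedge and compass. -/
def MemMSect (m : ℕ) (a : ℚ) : Prop :=
  |a| ≤ 1 ∧ ∃ b : ℝ, IsConstructibleOver ⊥ b ∧ (Chebyshev.T ℝ m).eval b = (a : ℝ)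

/-!
Let `p` be an odd prime dividing `m`, and let `C_p` be the rescaled Chebyshev polynomial with
`C_p(2 x) = 2 T_p(x)`. It is monic with integer coefficients, and
`C_p(w + w⁻¹) = w ^ p + w ^ (-p)`.

A constructible `b` with `T_m(b) = a` gives `c = 2 T_{m/p}(b)` with `C_p(c) = 2 a`, and `c` has
degree a power of two over the base field `F`. Write `c = w + w⁻¹` and `u = w ^ p`. Then `u` is at
most quadratic over `F`, being a root of `X ^ 2 - 2 a X + 1`, while `w` has degree prime to `p`, so
`X ^ p - u` is reducible and `u = v ^ p` for some `v ∈ F(u)`. If `u ∉ F` then `u` has norm `1`, and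
as `p` is odd, `v` can be multiplied by a power of its norm to have norm `1` too; its trace
`v + v⁻¹` is then a root of `C_p - 2 a` in `F`. Hence `a = T_p(b)` for some rational `b`.

Since `C_p` is monic and integral, the denominator of `2 a = C_p(2 b)` is the `p`-th power of that
of `2 b`. So `2 b` has height at most `2 B ^ (1 / p)`, which leaves `O(B ^ (2 / p))` values of `a`,
against at least `⌊B⌋` rationals of height at most `B` in `[-1, 1]`.
-/

open IntermediateField Module

section FieldDegree

variable {F L : Type*} [Field F] [Field L] [Algebra F L]

lemma finrank_adjoin_simple_eq_natDegree_minpoly (x : L) :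
    finrank F F⟮x⟯ = (minpoly F x).natDegree := by
  by_cases hx : IsIntegral F x
  · exact adjoin.finrank hx
  · rw [minpoly.eq_zero hx, natDegree_zero]
    refine finrank_of_not_finite fun _ => hx ?_
    exact isIntegral_iff.mp (IsIntegral.of_finite F (AdjoinSimple.gen F x))

lemma finrank_mul_natDegree_minpoly {x : L} {K : IntermediateField F L} (hK : K ≤ F⟮x⟯) :
    finrank F K * (minpoly K x).natDegree = (minpoly F x).natDegree := by
  rw [← finrank_adjoin_simple_eq_natDegree_minpoly, ← finrank_adjoin_simple_eq_natDegree_minpoly,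
    ← extendScalars_adjoin hK]
  exact finrank_mul_finrank F K (extendScalars hK)

lemma natDegree_minpoly_dvd_of_mem_adjoin {x y : L} (hx : x ∈ F⟮y⟯) :
    (minpoly F x).natDegree ∣ (minpoly F y).natDegree := by
  rw [← finrank_mul_natDegree_minpoly (adjoin_simple_le_iff.mpr hx),
    finrank_adjoin_simple_eq_natDegree_minpoly]
  exact dvd_mul_right _ _

lemma natDegree_minpoly_dvd_two {x : L} {s t : F}
    (hx : x ^ 2 = algebraMap F L s * x - algebraMap F L t) : (minpoly F x).natDegree ∣ 2 := by
  set q : F[X] := X ^ 2 - C s * X + C t with hq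
  have hq_monic : q.Monic := by rw [hq]; monicity!
  have hq_natDegree : q.natDegree = 2 := by rw [hq]; compute_degree!
  have hq_root : aeval x q = 0 := by simp [hq, hx]
  have hpos : 0 < (minpoly F x).natDegree := minpoly.natDegree_pos ⟨q, hq_monic, hq_root⟩
  have hle : (minpoly F x).natDegree ≤ 2 :=
    hq_natDegree ▸ natDegree_le_of_dvd (minpoly.dvd F x hq_root) hq_monic.ne_zero
  interval_cases (minpoly F x).natDegree <;> decide

lemma exists_pow_eq_of_natDegree_minpoly_ne {p : ℕ} (hp : p.Prime) {w : L} {u : F}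
    (hw : w ^ p = algebraMap F L u) (hdeg : (minpoly F w).natDegree ≠ p) : ∃ v : F, v ^ p = u := by
  by_contra! hu
  have hirr : Irreducible (X ^ p - C u) := X_pow_sub_C_irreducible_of_prime hp hu
  have hmin : X ^ p - C u = minpoly F w :=
    minpoly.eq_of_irreducible_of_monic hirr (by simp [hw]) (monic_X_pow_sub_C u hp.ne_zero)
  exact hdeg (by rw [← hmin, natDegree_X_pow_sub_C])

end FieldDegree

section Quadratic

variable {F K : Type*} [Field F] [Field K] [Algebra F K] [Algebra.IsQuadraticExtension F K]

lemma sq_eq_trace_mul_sub_norm (x : K) :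
    x ^ 2 = algebraMap F K (Algebra.trace F K x) * x - algebraMap F K (Algebra.norm F x) := by
  let b := finBasisOfFinrankEq F K (Algebra.IsQuadraticExtension.finrank_eq_two F K)
  have h := Algebra.aeval_self_charpoly_lmul (R := F) x
  rw [← LinearMap.charpoly_toMatrix _ b, Matrix.charpoly_fin_two] at h
  simp only [Algebra.trace_eq_matrix_trace b, Algebra.norm_eq_matrix_det b,
    Algebra.leftMulMatrix_apply]
  simp only [map_add, map_sub, map_mul, map_pow, aeval_X, aeval_C] at h
  linear_combination h

lemma norm_eq_of_sq_eq {x : K} (hx : x ∉ Set.range (algebraMap F K)) {s t : F}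
    (hst : x ^ 2 = algebraMap F K s * x - algebraMap F K t) : Algebra.norm F x = t := by
  have hlin : algebraMap F K (Algebra.trace F K x - s) * x =
      algebraMap F K (Algebra.norm F x - t) := by
    simp only [map_sub]
    linear_combination hst - sq_eq_trace_mul_sub_norm (F := F) x
  have hs : Algebra.trace F K x - s = 0 := by
    by_contra hs
    refine hx ⟨(Algebra.norm F x - t) / (Algebra.trace F K x - s), ?_⟩
    rw [map_div₀, ← hlin, mul_div_cancel_left₀ _ ((_root_.map_ne_zero _).mpr hs)]
  rw [hs, map_zero, zero_mul, eq_comm, map_eq_zero] at hlin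
  exact sub_eq_zero.mp hlin

lemma add_inv_eq_trace {x : K} (hx : Algebra.norm F x = 1) :
    x + x⁻¹ = algebraMap F K (Algebra.trace F K x) := by
  have hx0 : x ≠ 0 := by rintro rfl; simp at hx
  have hsq := sq_eq_trace_mul_sub_norm (F := F) x
  rw [hx, map_one] at hsq
  field_simp
  linear_combination hsq

lemma exists_pow_eq_and_norm_eq_one {n : ℕ} (hn : Odd n) {x : K}
    (hx : Algebra.norm F (x ^ n) = 1) : ∃ y : K, y ^ n = x ^ n ∧ Algebra.norm F y = 1 := by
  obtain ⟨k, rfl⟩ := hn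
  set N := Algebra.norm F x with hN
  have hN_pow : N ^ (2 * k + 1) = 1 := by rw [hN, ← map_pow, hx]
  refine ⟨algebraMap F K (N ^ k) * x, ?_, ?_⟩
  · rw [mul_pow, ← map_pow, pow_right_comm, hN_pow, one_pow, map_one, one_mul]
  · rw [map_mul, Algebra.norm_algebraMap, Algebra.IsQuadraticExtension.finrank_eq_two, ← hN,
      ← hN_pow]
    ring

end Quadratic

section Chebyshev

lemma eval_chebyshev_C_add_inv {F : Type*} [Field F] {x : F} (hx : x ≠ 0) (n : ℕ) :
    (Chebyshev.C F n).eval (x + x⁻¹) = x ^ n + (x ^ n)⁻¹ := by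
  rw [← dickson_one_one_eq_chebyshev_C, dickson_one_one_eval_add_inv x x⁻¹ (mul_inv_cancel₀ hx),
    inv_pow]

lemma eval_chebyshev_C_two_mul {R : Type*} [CommRing R] (n : ℤ) (x : R) :
    (Chebyshev.C R n).eval (2 * x) = 2 * (Chebyshev.T R n).eval x := by
  simpa using congrArg (eval x) (Chebyshev.C_comp_two_mul_X R n)

variable {F L : Type*} [Field F] [Field L] [Algebra F L]

lemma eval_chebyshev_C_eq_of_add_inv_eq {n : ℕ} {a b : F} {x : L} (hx : x ≠ 0)
    (hb : x + x⁻¹ = algebraMap F L b) (ha : x ^ n + (x ^ n)⁻¹ = algebraMap F L a) :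
    (Chebyshev.C F n).eval b = a := by
  apply (algebraMap F L).injective
  rw [Chebyshev.algebraMap_eval_C, ← hb, eval_chebyshev_C_add_inv hx, ha]

lemma sq_eq_add_inv_mul_sub_one {x : L} (hx : x ≠ 0) : x ^ 2 = (x + x⁻¹) * x - 1 := by
  field_simp
  ring

lemma exists_eval_chebyshev_C_eq_of_isQuadraticExtension [Algebra.IsQuadraticExtension F L] {n : ℕ}
    (hn : Odd n) {a : F} {v : L} (hv : v ^ n ∉ Set.range (algebraMap F L))
    (ha : v ^ n + (v ^ n)⁻¹ = algebraMap F L a) : ∃ b : F, (Chebyshev.C F n).eval b = a := by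
  have hv0 : v ^ n ≠ 0 := fun h => hv ⟨0, by rw [h, map_zero]⟩
  have hnorm : Algebra.norm F (v ^ n) = 1 :=
    norm_eq_of_sq_eq hv (s := a) (by rw [map_one, ← ha]; exact sq_eq_add_inv_mul_sub_one hv0)
  obtain ⟨x, hxv, hx⟩ := exists_pow_eq_and_norm_eq_one hn hnorm
  have hx0 : x ≠ 0 := fun h => hv0 (by rw [← hxv, h, zero_pow hn.pos.ne'])
  exact ⟨_, eval_chebyshev_C_eq_of_add_inv_eq hx0 (add_inv_eq_trace hx) (hxv ▸ ha)⟩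

lemma exists_eval_chebyshev_C_eq_of_mem_adjoin_pow {n : ℕ} (hn : Odd n) {a : F} {v : L}
    (hv0 : v ≠ 0) (hv : v ∈ F⟮v ^ n⟯) (ha : v ^ n + (v ^ n)⁻¹ = algebraMap F L a) :
    ∃ b : F, (Chebyshev.C F n).eval b = a := by
  have hu_sq : (v ^ n) ^ 2 = algebraMap F L a * v ^ n - algebraMap F L 1 := by
    rw [map_one, ← ha]
    exact sq_eq_add_inv_mul_sub_one (pow_ne_zero n hv0)
  rcases (Nat.dvd_prime Nat.prime_two).mp (natDegree_minpoly_dvd_two hu_sq) with hdeg | hdeg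
  · have hbot : F⟮v ^ n⟯ = ⊥ :=
      adjoin_simple_eq_bot_iff.mpr (minpoly.natDegree_eq_one_iff.mp hdeg)
    obtain ⟨v, rfl⟩ := mem_bot.mp (hbot ▸ hv)
    exact ⟨v + v⁻¹, eval_chebyshev_C_eq_of_add_inv_eq hv0 (by simp) ha⟩
  · have : Algebra.IsQuadraticExtension F F⟮v ^ n⟯ :=
      ⟨by rw [finrank_adjoin_simple_eq_natDegree_minpoly, hdeg]⟩
    refine exists_eval_chebyshev_C_eq_of_isQuadraticExtension hn (v := (⟨v, hv⟩ : F⟮v ^ n⟯)) ?_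
      (Subtype.ext ha)
    rintro ⟨r, hr⟩
    have hdeg_one : (minpoly F (v ^ n)).natDegree = 1 :=
      minpoly.natDegree_eq_one_iff.mpr ⟨r, congrArg Subtype.val hr⟩
    lia

lemma not_dvd_natDegree_minpoly_of_add_inv {p : ℕ} (hp : p.Prime) (hp2 : p ≠ 2) {w : L}
    (hw : w ≠ 0) (hdeg : ¬p ∣ (minpoly F (w + w⁻¹)).natDegree) :
    ¬p ∣ (minpoly F w).natDegree := by
  have hle : F⟮w + w⁻¹⟯ ≤ F⟮w⟯ := by
    rw [adjoin_simple_le_iff]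
    exact add_mem (mem_adjoin_simple_self F w) (inv_mem (mem_adjoin_simple_self F w))
  have htwo : (minpoly F⟮w + w⁻¹⟯ w).natDegree ∣ 2 :=
    natDegree_minpoly_dvd_two (s := AdjoinSimple.gen F (w + w⁻¹)) (t := 1)
      (by rw [map_one]; exact sq_eq_add_inv_mul_sub_one hw)
  rw [← finrank_mul_natDegree_minpoly hle, finrank_adjoin_simple_eq_natDegree_minpoly]
  rintro h
  rcases hp.dvd_mul.mp h with h | h
  · exact hdeg h
  · exact hp2 ((Nat.prime_dvd_prime_iff_eq hp Nat.prime_two).mp (h.trans htwo))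

lemma exists_mem_adjoin_pow_eq_of_not_dvd {p : ℕ} (hp : p.Prime) {w : L}
    (hdeg : ¬p ∣ (minpoly F w).natDegree) : ∃ v ∈ F⟮w ^ p⟯, v ^ p = w ^ p := by
  have hle : F⟮w ^ p⟯ ≤ F⟮w⟯ := by
    rw [adjoin_simple_le_iff]
    exact pow_mem (mem_adjoin_simple_self F w) p
  have hne : (minpoly F⟮w ^ p⟯ w).natDegree ≠ p := fun h =>
    hdeg ((dvd_of_eq h.symm).trans (Dvd.intro_left _ (finrank_mul_natDegree_minpoly hle)))
  obtain ⟨v, hv⟩ := exists_pow_eq_of_natDegree_minpoly_ne hp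
    (u := AdjoinSimple.gen F (w ^ p)) rfl hne
  exact ⟨v, v.2, congrArg Subtype.val hv⟩

lemma exists_add_inv_eq [IsAlgClosed L] (c : L) : ∃ w : L, w ≠ 0 ∧ w + w⁻¹ = c := by
  obtain ⟨w, hw⟩ := IsAlgClosed.exists_root (X ^ 2 - C c * X + 1 : L[X])
    (by rw [show degree (X ^ 2 - C c * X + 1 : L[X]) = 2 by compute_degree!]; decide)
  have hw_sq : w ^ 2 - c * w + 1 = 0 := by simpa using hw
  have hw0 : w ≠ 0 := by rintro rfl; simp at hw_sq
  refine ⟨w, hw0, ?_⟩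
  field_simp
  linear_combination hw_sq

theorem exists_eval_chebyshev_C_eq_of_not_dvd_natDegree_minpoly {p : ℕ} (hp : p.Prime) (hp2 : p ≠ 2)
    {a : F} {c : L} (hdeg : ¬p ∣ (minpoly F c).natDegree)
    (hc : (Chebyshev.C L p).eval c = algebraMap F L a) :
    ∃ b : F, (Chebyshev.C F p).eval b = a := by
  let Ω := AlgebraicClosure L
  obtain ⟨w, hw0, hwc⟩ := exists_add_inv_eq (algebraMap L Ω c)
  have hdeg_c : minpoly F (w + w⁻¹) = minpoly F c := by
    rw [hwc, minpoly.algebraMap_eq (algebraMap L Ω).injective]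
  have ha : w ^ p + (w ^ p)⁻¹ = algebraMap F Ω a := by
    rw [← eval_chebyshev_C_add_inv hw0, hwc, ← Chebyshev.algebraMap_eval_C, hc,
      ← IsScalarTower.algebraMap_apply]
  obtain ⟨v, hv, hvw⟩ := exists_mem_adjoin_pow_eq_of_not_dvd hp
    (not_dvd_natDegree_minpoly_of_add_inv hp hp2 hw0 (hdeg_c ▸ hdeg))
  have hv0 : v ≠ 0 := fun h => pow_ne_zero p hw0 (by rw [← hvw, h, zero_pow hp.ne_zero])
  rw [← hvw] at hv ha
  exact exists_eval_chebyshev_C_eq_of_mem_adjoin_pow (hp.odd_of_ne_two hp2) hv0 hv ha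

end Chebyshev

section Constructible

variable {L : Type*} [Field L]

lemma natDegree_minpoly_dvd_relfinrank {A B : Subfield L} (hle : A ≤ B) {x : L} (hx : x ∈ B) :
    (minpoly A x).natDegree ∣ A.relfinrank B := by
  rw [← finrank_adjoin_simple_eq_natDegree_minpoly, Subfield.relfinrank_eq_finrank_of_le hle]
  exact finrank_dvd_of_le_right (adjoin_simple_le_iff.mpr hx)

lemma extendScalars_closure_union_singleton {A : Subfield L} {x : L}
    (hle : A ≤ Subfield.closure (A ∪ {x})) : Subfield.extendScalars hle = A⟮x⟯ :=
  toSubfield_injective <| by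
    rw [Subfield.extendScalars_toSubfield, adjoin_toSubfield]
    congr
    exact Subtype.range_coe.symm

lemma relfinrank_closure_union_singleton_dvd_two {A : Subfield L} {x : L} (hx : x ^ 2 ∈ A) :
    A.relfinrank (Subfield.closure (A ∪ {x})) ∣ 2 := by
  have hle : A ≤ Subfield.closure (A ∪ {x}) := fun y hy => Subfield.subset_closure (.inl hy)
  rw [Subfield.relfinrank_eq_finrank_of_le hle, extendScalars_closure_union_singleton,
    finrank_adjoin_simple_eq_natDegree_minpoly]
  refine natDegree_minpoly_dvd_two (s := 0) (t := -⟨x ^ 2, hx⟩) ?_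
  rw [map_zero, zero_mul, map_neg, zero_sub, neg_neg]
  rfl

lemma relfinrank_dvd_two_pow_of_chain {A : ℕ → Subfield L} {k : ℕ}
    (hA : ∀ i < k, ∃ x : L, x ^ 2 ∈ A i ∧ A (i + 1) = Subfield.closure (A i ∪ {x})) :
    A 0 ≤ A k ∧ (A 0).relfinrank (A k) ∣ 2 ^ k := by
  induction k with
  | zero => simp
  | succ k ih =>
    obtain ⟨h0k, hdvd⟩ := ih fun i hi => hA i (by lia)
    obtain ⟨x, hx, hk⟩ := hA k k.lt_succ_self
    have hle : A k ≤ A (k + 1) := hk ▸ fun y hy => Subfield.subset_closure (.inl hy)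
    refine ⟨h0k.trans hle, ?_⟩
    rw [← Subfield.relfinrank_mul_relfinrank h0k hle, pow_succ, hk]
    exact mul_dvd_mul hdvd (relfinrank_closure_union_singleton_dvd_two hx)

end Constructible

namespace IsConstructibleOver

variable {F : Subfield ℝ} {b : ℝ}

lemma exists_natDegree_minpoly_dvd_two_pow (hb : IsConstructibleOver F b) :
    ∃ k, (minpoly F b).natDegree ∣ 2 ^ k := by
  obtain ⟨k, A, rfl, hbk, hA⟩ := hb
  obtain ⟨hle, hdvd⟩ := relfinrank_dvd_two_pow_of_chain hA
  exact ⟨k, (natDegree_minpoly_dvd_relfinrank hle hbk).trans hdvd⟩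

theorem exists_eval_T_eq (hb : IsConstructibleOver F b) {m p : ℕ} (hp : p.Prime) (hp2 : p ≠ 2)
    (hpm : p ∣ m) {a : F} (ha : (Chebyshev.T ℝ m).eval b = a) :
    ∃ c : F, (Chebyshev.T F p).eval c = a := by
  obtain ⟨n, rfl⟩ := hpm
  set x : ℝ := 2 * (Chebyshev.T ℝ n).eval b with hx
  have hx_mem : x ∈ F⟮b⟯ := by
    have hT := algebra_adjoin_le_adjoin F {b}
      (aeval_mem_adjoin_singleton F b (p := Chebyshev.T F n))
    rw [Chebyshev.aeval_T] at hT
    exact mul_mem (ofNat_mem _ 2) hT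
  have hx_deg : ¬p ∣ (minpoly F x).natDegree := fun h => by
    obtain ⟨k, hk⟩ := hb.exists_natDegree_minpoly_dvd_two_pow
    have hp_dvd : p ∣ 2 ^ k := h.trans ((natDegree_minpoly_dvd_of_mem_adjoin hx_mem).trans hk)
    exact hp2 ((Nat.prime_dvd_prime_iff_eq hp Nat.prime_two).mp (hp.dvd_of_dvd_pow hp_dvd))
  have hx_eval : (Chebyshev.C ℝ p).eval x = algebraMap F ℝ (2 * a) := by
    rw [hx, eval_chebyshev_C_two_mul, ← eval_comp, ← Chebyshev.T_mul, ← Nat.cast_mul, ha,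
      map_mul, map_ofNat]
    rfl
  obtain ⟨c, hc⟩ := exists_eval_chebyshev_C_eq_of_not_dvd_natDegree_minpoly hp hp2 hx_deg hx_eval
  refine ⟨c / 2, mul_left_cancel₀ two_ne_zero ?_⟩
  rw [← eval_chebyshev_C_two_mul, mul_div_cancel₀ _ two_ne_zero, hc]

end IsConstructibleOver

theorem MemMSect.exists_rat_eval_T_eq {m p : ℕ} (hp : p.Prime) (hp2 : p ≠ 2) (hpm : p ∣ m) {a : ℚ}
    (ha : MemMSect m a) : ∃ b : ℚ, |b| ≤ 1 ∧ (Chebyshev.T ℚ p).eval b = a := by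
  obtain ⟨ha_le, x, hx, hxa⟩ := ha
  obtain ⟨⟨c, hc⟩, hca⟩ := hx.exists_eval_T_eq hp hp2 hpm (a := (a : (⊥ : Subfield ℝ))) hxa
  obtain ⟨b, rfl⟩ : ∃ b : ℚ, (b : ℝ) = c := by
    simpa [Subfield.bot_eq_of_charZero] using hc
  have hba : (Chebyshev.T ℝ p).eval (b : ℝ) = a := by
    have := congrArg (algebraMap _ ℝ) hca
    rwa [Chebyshev.algebraMap_eval_T] at this
  refine ⟨b, ?_, ?_⟩
  · have hp0 : (p : ℤ) ≠ 0 := mod_cast hp.ne_zero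
    have : |(b : ℝ)| ≤ 1 := by
      rw [Chebyshev.abs_eval_T_real_le_one_iff hp0, hba]
      exact_mod_cast ha_le
    exact_mod_cast this
  · apply (algebraMap ℚ ℝ).injective
    rw [Chebyshev.algebraMap_eval_T]
    exact hba

section Denominator

lemma natDegree_chebyshev_C {R : Type*} [CommRing R] [IsDomain R] [NeZero (2 : R)] (n : ℤ) :
    (Chebyshev.C R n).natDegree = n.natAbs := by
  have hdeg := congrArg natDegree (Chebyshev.C_comp_two_mul_X R n)
  rwa [natDegree_comp, ← C_ofNat, natDegree_C_mul_X _ two_ne_zero, mul_one,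
    natDegree_C_mul two_ne_zero, Chebyshev.natDegree_T] at hdeg

lemma monic_chebyshev_C {R : Type*} [CommRing R] [IsDomain R] [NeZero (2 : R)] {n : ℤ}
    (hn : n ≠ 0) : (Chebyshev.C R n).Monic := by
  have hlead := congrArg leadingCoeff (Chebyshev.C_comp_two_mul_X R n)
  have hX : (2 * X : R[X]).natDegree ≠ 0 := by
    rw [← C_ofNat, natDegree_C_mul_X _ two_ne_zero]
    exact one_ne_zero
  rw [leadingCoeff_comp hX, ← C_ofNat, leadingCoeff_mul, leadingCoeff_mul, leadingCoeff_X,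
    leadingCoeff_C, mul_one, Chebyshev.leadingCoeff_T, natDegree_chebyshev_C, ← pow_succ',
    Nat.sub_add_cancel (Int.natAbs_pos.mpr hn)] at hlead
  exact mul_right_cancel₀ (pow_ne_zero _ two_ne_zero) (hlead.trans (one_mul _).symm)

lemma dvd_eval_scaleRoots_sub {R : Type*} [CommRing R] (f : R[X]) (s y : R) :
    s ∣ (f.scaleRoots s).eval y - f.leadingCoeff * y ^ f.natDegree := by
  rw [eval_eq_sum_range, natDegree_scaleRoots, Finset.sum_range_succ, coeff_scaleRoots_natDegree,
    add_sub_cancel_right]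
  refine Finset.dvd_sum fun i hi => ?_
  rw [coeff_scaleRoots]
  have hi : f.natDegree - i ≠ 0 := by have := Finset.mem_range.mp hi; lia
  exact ((dvd_pow_self s hi).mul_left _).mul_right _

lemma den_aeval_of_monic {f : ℤ[X]} (hf : f.Monic) (x : ℚ) :
    (aeval x f).den = x.den ^ f.natDegree := by
  set N : ℤ := (f.scaleRoots (x.den : ℤ)).eval x.num with hN
  have hcop : IsCoprime N ((x.den : ℤ) ^ f.natDegree) := by
    obtain ⟨k, hk⟩ := dvd_eval_scaleRoots_sub f (x.den : ℤ) x.num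
    rw [hf.leadingCoeff, one_mul, sub_eq_iff_eq_add'] at hk
    rw [hN, hk]
    exact x.isCoprime_num_den.pow_left.add_mul_left_left k |>.pow_right
  have hpos : 0 < (x.den : ℤ) ^ f.natDegree := pow_pos (mod_cast x.pos) _
  have heval : aeval x f = N / ((x.den ^ f.natDegree : ℤ) : ℚ) := by
    have hscale := scaleRoots_eval₂_mul (p := f) (algebraMap ℤ ℚ) x (x.den : ℤ)
    rw [eq_intCast, Int.cast_natCast, Rat.den_mul_eq_num, ← eq_intCast (algebraMap ℤ ℚ) x.num,
      eval₂_at_apply, eq_intCast] at hscale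
    rw [eq_div_iff (mod_cast hpos.ne'), mul_comm, hN, hscale, aeval_def]
    push_cast
    rfl
  rw [heval]
  exact_mod_cast Rat.den_div_eq_of_coprime hpos (Int.isCoprime_iff_nat_coprime.mp hcop)

lemma den_two_mul_pow_dvd_den_eval_T (n : ℕ) (b : ℚ) :
    (2 * b).den ^ n ∣ ((Chebyshev.T ℚ n).eval b).den := by
  rcases eq_or_ne n 0 with rfl | hn
  · simp
  calc (2 * b).den ^ n = (aeval (2 * b) (Chebyshev.C ℤ n)).den := by
        rw [den_aeval_of_monic (monic_chebyshev_C (mod_cast hn)), natDegree_chebyshev_C,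
          Int.natAbs_natCast]
    _ = (2 * (Chebyshev.T ℚ n).eval b).den := by rw [Chebyshev.aeval_C, eval_chebyshev_C_two_mul]
    _ ∣ (2 : ℚ).den * ((Chebyshev.T ℚ n).eval b).den := Rat.mul_den_dvd _ _
    _ = ((Chebyshev.T ℚ n).eval b).den := one_mul _

end Denominator

section Height

lemma ratHeight_le_mul_den {x : ℚ} {k : ℕ} (hk : 1 ≤ k) (hx : |x| ≤ k) :
    ratHeight x ≤ k * x.den := by
  refine max_le ?_ (Nat.le_mul_of_pos_left _ hk)
  have hnum : |(x.num : ℚ)| ≤ k * x.den := by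
    rw [← Rat.mul_den_eq_num, abs_mul, Nat.abs_cast]
    gcongr
  zify
  exact_mod_cast hnum

lemma ratHeight_two_mul_pow_le (n : ℕ) {b : ℚ} (hb : |b| ≤ 1) :
    ratHeight (2 * b) ^ n ≤ 2 ^ n * ratHeight ((Chebyshev.T ℚ n).eval b) := by
  have htwo : |2 * b| ≤ (2 : ℕ) := by
    rw [abs_mul, abs_two]
    push_cast
    linarith
  calc ratHeight (2 * b) ^ n ≤ (2 * (2 * b).den) ^ n := by
        gcongr
        exact ratHeight_le_mul_den one_le_two htwo
    _ = 2 ^ n * (2 * b).den ^ n := mul_pow ..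
    _ ≤ 2 ^ n * ((Chebyshev.T ℚ n).eval b).den := by
        gcongr
        exact Nat.le_of_dvd (Rat.pos _) (den_two_mul_pow_dvd_den_eval_T n b)
    _ ≤ 2 ^ n * ratHeight ((Chebyshev.T ℚ n).eval b) := by
        gcongr
        exact le_max_right _ _

lemma ratHeight_two_mul_le_rpow {n : ℕ} (hn : n ≠ 0) {b : ℚ} (hb : |b| ≤ 1) {B : ℝ}
    (hB : ratHeight ((Chebyshev.T ℚ n).eval b) ≤ B) :
    ratHeight (2 * b) ≤ 2 * B ^ (n⁻¹ : ℝ) := by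
  have hB0 : 0 ≤ B := (Nat.cast_nonneg _).trans hB
  refine le_of_pow_le_pow_left₀ hn (by positivity) ?_
  rw [mul_pow, Real.rpow_inv_natCast_pow hB0 hn]
  calc (ratHeight (2 * b) : ℝ) ^ n ≤ 2 ^ n * ratHeight ((Chebyshev.T ℚ n).eval b) :=
        mod_cast ratHeight_two_mul_pow_le n hb
    _ ≤ 2 ^ n * B := by gcongr

lemma ratHeight_inv_natCast {n : ℕ} (hn : 0 < n) : ratHeight (n : ℚ)⁻¹ = n := by
  rw [ratHeight, Rat.inv_natCast_num_of_pos hn, Rat.inv_natCast_den_of_pos hn]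
  exact max_eq_right hn

lemma setOf_ratHeight_le_subset (N : ℕ) :
    {x : ℚ | ratHeight x ≤ N} ⊆ ((Finset.Icc (-(N : ℤ)) N ×ˢ Finset.Icc 1 N).image
      fun q : ℤ × ℕ => (q.1 : ℚ) / q.2 : Finset ℚ) := by
  intro x hx
  obtain ⟨hnum, hden⟩ : x.num.natAbs ≤ N ∧ x.den ≤ N := max_le_iff.mp hx
  simp only [Finset.coe_image, Set.mem_image, Finset.mem_coe, Finset.mem_product, Finset.mem_Icc]
  exact ⟨(x.num, x.den), ⟨by lia, x.pos, hden⟩, Rat.num_div_den x⟩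

lemma finite_setOf_ratHeight_le (R : ℝ) : {x : ℚ | (ratHeight x : ℝ) ≤ R}.Finite :=
  (Finset.finite_toSet _).subset fun _ hx => setOf_ratHeight_le_subset ⌊R⌋₊ (Nat.le_floor hx)

lemma ncard_setOf_ratHeight_le {R : ℝ} (hR : 0 ≤ R) :
    ({x : ℚ | (ratHeight x : ℝ) ≤ R}.ncard : ℝ) ≤ (2 * R + 1) * R := by
  have hcard : {x : ℚ | (ratHeight x : ℝ) ≤ R}.ncard ≤ (2 * ⌊R⌋₊ + 1) * ⌊R⌋₊ := by
    refine (Set.ncard_le_ncard fun x hx => setOf_ratHeight_le_subset ⌊R⌋₊ (Nat.le_floor hx)).trans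
      ?_
    rw [Set.ncard_coe_finset]
    refine Finset.card_image_le.trans_eq ?_
    rw [Finset.card_product, Int.card_Icc, Nat.card_Icc]
    congr 1
    lia
  calc ({x : ℚ | (ratHeight x : ℝ) ≤ R}.ncard : ℝ) ≤ (2 * ⌊R⌋₊ + 1) * ⌊R⌋₊ := mod_cast hcard
    _ ≤ (2 * R + 1) * R := by gcongr <;> exact Nat.floor_le hR

lemma floor_le_ncard_abs_le_one_ratHeight_le (B : ℝ) :
    ⌊B⌋₊ ≤ {a : ℚ | |a| ≤ 1 ∧ (ratHeight a : ℝ) ≤ B}.ncard := by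
  have hinj : Set.InjOn (fun n : ℕ => (n : ℚ)⁻¹) (Finset.Icc 1 ⌊B⌋₊) :=
    (inv_injective.comp Nat.cast_injective).injOn
  rw [← Nat.add_sub_cancel (n := ⌊B⌋₊) (m := 1), ← Nat.card_Icc, ← Set.ncard_coe_finset,
    ← hinj.ncard_image]
  refine Set.ncard_le_ncard ?_ ((finite_setOf_ratHeight_le B).subset fun _ ha => ha.2)
  rintro _ ⟨n, hn, rfl⟩
  obtain ⟨hn1, hnB⟩ := Finset.mem_Icc.mp hn
  refine ⟨?_, ?_⟩
  · rw [abs_inv, Nat.abs_cast]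
    exact inv_le_one_of_one_le₀ (mod_cast hn1)
  · rw [ratHeight_inv_natCast hn1]
    exact (Nat.le_floor_iff' (Nat.one_le_iff_ne_zero.mp hn1)).mp hnB

end Height

section Density

variable {m p : ℕ}

lemma setOf_memMSect_subset_image (hp : p.Prime) (hp2 : p ≠ 2) (hpm : p ∣ m) (B : ℝ) :
    {a : ℚ | MemMSect m a ∧ (ratHeight a : ℝ) ≤ B} ⊆
      (fun x => (Chebyshev.T ℚ p).eval (x / 2)) ''
        {x : ℚ | (ratHeight x : ℝ) ≤ 2 * B ^ (p⁻¹ : ℝ)} := by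
  rintro _ ⟨ha, hB⟩
  obtain ⟨b, hb, rfl⟩ := ha.exists_rat_eval_T_eq hp hp2 hpm
  exact ⟨2 * b, ratHeight_two_mul_le_rpow hp.ne_zero hb hB,
    by simp only [mul_div_cancel_left₀ b two_ne_zero]⟩

lemma ncard_memMSect_le (hp : p.Prime) (hp2 : p ≠ 2) (hpm : p ∣ m) {B : ℝ} (hB : 1 ≤ B) :
    ({a : ℚ | MemMSect m a ∧ (ratHeight a : ℝ) ≤ B}.ncard : ℝ) ≤ 10 * B ^ (2 / p : ℝ) := by
  set R : ℝ := B ^ (p⁻¹ : ℝ) with hR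
  have hR1 : 1 ≤ R := Real.one_le_rpow hB (by positivity)
  have hR_sq : R ^ 2 = B ^ (2 / p : ℝ) := by
    rw [hR, ← Real.rpow_mul_natCast (by positivity), Nat.cast_ofNat, inv_mul_eq_div]
  have hfin := finite_setOf_ratHeight_le (2 * R)
  calc ({a : ℚ | MemMSect m a ∧ (ratHeight a : ℝ) ≤ B}.ncard : ℝ)
      ≤ {x : ℚ | (ratHeight x : ℝ) ≤ 2 * R}.ncard := mod_cast
        (Set.ncard_le_ncard (setOf_memMSect_subset_image hp hp2 hpm B) (hfin.image _)).trans
          (Set.ncard_image_le hfin)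
    _ ≤ (2 * (2 * R) + 1) * (2 * R) := ncard_setOf_ratHeight_le (by positivity)
    _ ≤ 10 * R ^ 2 := by nlinarith
    _ = 10 * B ^ (2 / p : ℝ) := by rw [hR_sq]

lemma density_memMSect_le (hp : p.Prime) (hp2 : p ≠ 2) (hpm : p ∣ m) {B : ℝ} (hB : 1 ≤ B) :
    ({a : ℚ | MemMSect m a ∧ (ratHeight a : ℝ) ≤ B}.ncard : ℝ) /
      ({a : ℚ | |a| ≤ 1 ∧ (ratHeight a : ℝ) ≤ B}.ncard : ℝ) ≤ 20 * B ^ (-(1 - 2 / p) : ℝ) := by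
  have hB0 : 0 < B := one_pos.trans_le hB
  have hfloor : B / 2 ≤ ⌊B⌋₊ := by
    have hlt := Nat.lt_floor_add_one B
    have hone : (1 : ℝ) ≤ ⌊B⌋₊ := mod_cast Nat.one_le_floor_iff B |>.mpr hB
    linarith
  calc ({a : ℚ | MemMSect m a ∧ (ratHeight a : ℝ) ≤ B}.ncard : ℝ) /
        ({a : ℚ | |a| ≤ 1 ∧ (ratHeight a : ℝ) ≤ B}.ncard : ℝ)
      ≤ 10 * B ^ (2 / p : ℝ) / (B / 2) := by
        gcongr
        · exact ncard_memMSect_le hp hp2 hpm hB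
        · exact hfloor.trans (mod_cast floor_le_ncard_abs_le_one_ratHeight_le B)
    _ = 20 * B ^ (-(1 - 2 / p) : ℝ) := by
        rw [neg_sub, Real.rpow_sub_one hB0.ne']
        ring

end Density

/-- If the maximal odd divisor of the positive integer `m` is greater
than 1 (i.e. `m` is not a power of 2), then the density of `m`-Sect in `[-1,1] ∩ ℚ` is
zero:  the ratio of the number of rationals in `m`-Sect of height `≤ B` to the number of
rationals in `[-1,1]` of height `≤ B` tends to `0` as `B → ∞`. -/
theorem density_mSect_zero (m : ℕ) (hm : 0 < m) (hmodd : 1 < ordCompl[2] m) :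
    Filter.Tendsto
      (fun B : ℝ =>
        ({a : ℚ | MemMSect m a ∧ (ratHeight a : ℝ) ≤ B}.ncard : ℝ) /
        ({a : ℚ | |a| ≤ 1 ∧ (ratHeight a : ℝ) ≤ B}.ncard : ℝ))
      Filter.atTop (nhds 0) := by
  obtain ⟨p, hp, hp_dvd⟩ := Nat.exists_prime_and_dvd hmodd.ne'
  have hpm : p ∣ m := hp_dvd.trans (Nat.ordCompl_dvd m 2)
  have hp2 : p ≠ 2 := by
    rintro rfl
    exact Nat.not_dvd_ordCompl Nat.prime_two hm.ne' hp_dvd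
  have hexp : (0 : ℝ) < 1 - 2 / p := by
    have : (2 : ℝ) < p := mod_cast hp.two_le.lt_of_ne' hp2
    rw [sub_pos, div_lt_one (by positivity)]
    exact this
  have hbound : Filter.Tendsto (fun B : ℝ => 20 * B ^ (-(1 - 2 / p) : ℝ))
      Filter.atTop (nhds 0) := by
    simpa using (tendsto_rpow_neg_atTop hexp).const_mul 20
  refine squeeze_zero' (.of_forall fun B => by positivity) ?_ hbound
  filter_upwards [Filter.eventually_ge_atTop 1] with B hB
  exact density_memMSect_le hp hp2 hpm hB
end
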